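/- arXiv:2605.22745 — 2 statements merged into one kernel-verified Lean document; each statement's English description precedes it below -/
import Mathlib

section
/- Let ξ be the generic n×n Grassmann matrix, i.e. the matrix whose entries ξ_{i,j} are the n² anticommuting generators of the exterior algebra on an n²-dimensional space. Then ξ^{2n} = 0. (This is an interpretation of the Amitsur–Levitzki theorem: the standard identity of degree 2n holds for n×n matrices.) -/
/-- The generic `n × n` Grassmann matrix: the matrix whose `(i,j)` entry is the generator
`ξ_{i,j}` of the exterior algebra on an `n²`-dimensional vector space with basis indexed by
pairs `(i,j)`. -/
noncomputable def genericGrassmannMatrix (F : Type*) [Field F] (n : ℕ) :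
    Matrix (Fin n) (Fin n) (ExteriorAlgebra F ((Fin n × Fin n) → F)) :=
  fun i j => ExteriorAlgebra.ι F (Pi.single (i, j) 1)

namespace AmitsurAux

open Matrix Polynomial

/-- Jacobi's formula for polynomial matrices. -/
theorem derivative_det {R : Type*} [CommRing R] {m : Type*} [Fintype m] [DecidableEq m]
    (A : Matrix m m R[X]) :
    derivative A.det = (A.adjugate * A.map derivative).trace := by
  have h1 : (A.adjugate * A.map derivative).trace
      = ∑ i, (A.updateCol i (fun k => derivative (A k i))).det := by
    simp only [Matrix.trace, Matrix.diag]
    refine Finset.sum_congr rfl fun i _ => ?_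
    rw [← Matrix.cramer_apply, Matrix.cramer_eq_adjugate_mulVec]
    simp [Matrix.mul_apply, Matrix.mulVec, dotProduct]
  rw [h1]
  simp only [Matrix.det_apply, map_sum]
  rw [Finset.sum_comm]
  refine Finset.sum_congr rfl fun σ _ => ?_
  rw [← Finset.smul_sum]
  have : ∀ p : R[X], derivative (Equiv.Perm.sign σ • p) = Equiv.Perm.sign σ • derivative p := by
    intro p
    rcases Int.units_eq_one_or (Equiv.Perm.sign σ) with h | h <;> simp [h]
  rw [this, derivative_prod_finset]
  congr 1
  refine Finset.sum_congr rfl fun i _ => ?_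
  rw [← Finset.mul_prod_erase Finset.univ _ (Finset.mem_univ i), mul_comm]
  congr 1
  · simp
  · refine Finset.prod_congr rfl fun j hj => ?_
    rw [Matrix.updateCol_ne (Finset.ne_of_mem_erase hj)]

theorem pow_eq_zero_of_trace {R : Type*} [CommRing R] (hR : ∀ (k : ℕ) (x : R), k ≠ 0 → k * x = 0 → x = 0)
    {n : ℕ} (M : Matrix (Fin n) (Fin n) R)
    (hM : ∀ k, (M ^ (k + 1)).trace = 0) : M ^ n = 0 := by
  nontriviality R
  set N : Matrix (Fin n) (Fin n) R[X] := M.map C with hN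
  set B : Matrix (Fin n) (Fin n) R[X] := 1 - (X : R[X]) • N with hB
  have hBd : B.map derivative = -N := by
    ext i j : 2
    by_cases h : i = j <;> simp [hB, hN, Matrix.one_apply, h]
  have hNp : ∀ k, N ^ k = (M ^ k).map C := by
    intro k
    have := map_pow (C (R := R)).mapMatrix M k
    simpa [hN] using this.symm
  have htr : ∀ k, (N ^ (k + 1)).trace = 0 := by
    intro k
    rw [hNp]
    have := hM k
    have h2 : ((M ^ (k + 1)).map C).trace = C (M ^ (k + 1)).trace := by
      simp [Matrix.trace]
    rw [h2, this, map_zero]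
  have hgeom : B * ∑ i ∈ Finset.range n, ((X : R[X]) • N) ^ i = 1 - ((X : R[X]) • N) ^ n :=
    mul_neg_geom_sum _ _
  have hder : derivative M.charpolyRev
      = X ^ n * (-(B.adjugate * N ^ (n + 1)).trace) := by
    have e1 : derivative M.charpolyRev = -(B.adjugate * N).trace := by
      change derivative B.det = _
      rw [derivative_det, hBd]; simp
    have e2 : B.adjugate * (1 - ((X : R[X]) • N) ^ n) * N
        = B.det • ((∑ i ∈ Finset.range n, ((X : R[X]) • N) ^ i) * N) := by
      rw [← hgeom, ← mul_assoc, Matrix.adjugate_mul]; simp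
    have e3 : ((∑ i ∈ Finset.range n, ((X : R[X]) • N) ^ i) * N).trace = 0 := by
      rw [Finset.sum_mul, Matrix.trace_sum]
      refine Finset.sum_eq_zero fun i _ => ?_
      rw [_root_.smul_pow, smul_mul_assoc, ← pow_succ, Matrix.trace_smul, htr, smul_zero]
    have e4 := congrArg Matrix.trace e2
    rw [Matrix.trace_smul, e3, smul_zero, mul_sub, sub_mul, mul_one, Matrix.trace_sub, _root_.smul_pow,
      mul_smul_comm, smul_mul_assoc, mul_assoc, ← pow_succ, Matrix.trace_smul, sub_eq_zero] at e4
    rw [e1, e4, smul_eq_mul, mul_neg]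
  have hc : ∀ k, k < n → M.charpolyRev.coeff (k + 1) = 0 := by
    intro k hk
    have h := congrArg (fun p => coeff p k) hder
    simp only [coeff_derivative, coeff_X_pow_mul', not_le.mpr hk, if_false] at h
    refine hR (k + 1) _ (by omega) ?_
    rw [mul_comm]; exact_mod_cast h
  have hcp : ∀ i, i < n → M.charpoly.coeff i = 0 := by
    intro i hi
    have h := hc (n - 1 - i) (by omega)
    rw [← Matrix.reverse_charpoly, coeff_reverse, Matrix.charpoly_natDegree_eq_dim,
      Fintype.card_fin, revAt_le (by omega)] at h
    convert h using 2
    omega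
  have hX : M.charpoly = X ^ n := by
    have hd : M.charpoly.natDegree = n := by simp
    have hm := M.charpoly_monic
    ext i
    rw [coeff_X_pow]
    rcases lt_trichotomy i n with h | h | h
    · rw [hcp i h, if_neg h.ne]
    · subst h
      rw [if_pos rfl]
      have := hm.coeff_natDegree
      rwa [hd] at this
    · rw [if_neg h.ne', coeff_eq_zero_of_natDegree_lt (by omega)]
  have := M.aeval_self_charpoly
  rwa [hX, map_pow, aeval_X] at this

section Grassmann

variable (F : Type*) [Field F] (n : ℕ)

/-- Products of two degree one elements. -/
def gens : Set (ExteriorAlgebra F ((Fin n × Fin n) → F)) :=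
  {x | ∃ a b, x = ExteriorAlgebra.ι F a * ExteriorAlgebra.ι F b}

theorem ι_swap (a b : (Fin n × Fin n) → F) :
    ExteriorAlgebra.ι F a * ExteriorAlgebra.ι F b
      = -(ExteriorAlgebra.ι F b * ExteriorAlgebra.ι F a) :=
  eq_neg_of_add_eq_zero_left (ExteriorAlgebra.ι_add_mul_swap a b)

theorem ι_comm_gens (c : (Fin n × Fin n) → F) (x) (hx : x ∈ gens F n) :
    ExteriorAlgebra.ι F c * x = x * ExteriorAlgebra.ι F c := by
  obtain ⟨a, b, rfl⟩ := hx
  rw [← mul_assoc, ι_swap F n c a, neg_mul, mul_assoc, ι_swap F n c b, mul_neg, neg_neg, mul_assoc]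

theorem gens_comm : ∀ x ∈ gens F n, ∀ y ∈ gens F n, x * y = y * x := by
  rintro x ⟨a, b, rfl⟩ y hy
  rw [mul_assoc, ι_comm_gens F n b y hy, ← mul_assoc, ι_comm_gens F n a y hy, mul_assoc]

theorem ι_comm_adjoin (c : (Fin n × Fin n) → F) (x) (hx : x ∈ Algebra.adjoin F (gens F n)) :
    ExteriorAlgebra.ι F c * x = x * ExteriorAlgebra.ι F c := by
  induction hx using Algebra.adjoin_induction with
  | mem x hx => exact ι_comm_gens F n c x hx
  | algebraMap r => exact (Algebra.commutes r _).symm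
  | add x y _ _ hx hy => rw [mul_add, add_mul, hx, hy]
  | mul x y _ _ hx hy => rw [← mul_assoc, hx, mul_assoc, hy, mul_assoc]

end Grassmann

end AmitsurAux

open AmitsurAux in
/-- The generic `n × n` Grassmann matrix `ξ` over a field of characteristic zero satisfies
`ξ^{2n} = 0` (an interpretation of the Amitsur–Levitzki theorem). -/
theorem genericGrassmannMatrix_pow_two_mul_self_eq_zero
    (F : Type*) [Field F] [CharZero F] (n : ℕ) :
    (genericGrassmannMatrix F n) ^ (2 * n) = 0 := by
  set ξ := genericGrassmannMatrix F n with hξ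
  let S := Algebra.adjoin F (gens F n)
  letI : CommRing S := Algebra.adjoinCommRingOfComm F (gens_comm F n)
  have hmem : ∀ i j, (ξ ^ 2) i j ∈ S := by
    intro i j
    rw [sq, Matrix.mul_apply]
    exact S.sum_mem fun k _ => Algebra.subset_adjoin ⟨_, _, rfl⟩
  let M : Matrix (Fin n) (Fin n) S := Matrix.of fun i j => ⟨(ξ ^ 2) i j, hmem i j⟩
  let f : S →+* ExteriorAlgebra F ((Fin n × Fin n) → F) := S.val.toRingHom
  have hf : Function.Injective f := Subtype.val_injective
  have hMf : f.mapMatrix M = ξ ^ 2 := by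
    ext i j : 2
    rfl
  have hMk : ∀ k, f.mapMatrix (M ^ k) = ξ ^ (2 * k) := by
    intro k
    rw [map_pow, hMf, pow_mul]
  have hE : ∀ (k : ℕ) (x : ExteriorAlgebra F ((Fin n × Fin n) → F)), k ≠ 0 → k * x = 0 → x = 0 := by
    intro k x hk hx
    have h1 : (k : F) • x = 0 := by
      rw [Algebra.smul_def, map_natCast, hx]
    exact (smul_eq_zero.mp h1).resolve_left (Nat.cast_ne_zero.mpr hk)
  have hM0 : M ^ n = 0 := by
    refine pow_eq_zero_of_trace ?_ M ?_
    · intro k x hk hx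
      apply hf
      rw [map_zero]
      refine hE k _ hk ?_
      rw [← map_natCast f, ← map_mul, hx, map_zero]
    · intro k
      apply hf
      rw [map_zero]
      have h0 : f (M ^ (k + 1)).trace = (ξ ^ (2 * (k + 1))).trace := by
        rw [← hMk]
        simp [Matrix.trace]
      rw [h0]
      set P := ξ ^ (2 * k) with hP
      have hPm : ∀ i j, P i j ∈ S := by
        intro i j
        rw [hP, ← hMk]
        exact ((M ^ k) i j).2
      have hPc : ∀ i j a b, ξ a b * P i j = P i j * ξ a b := fun i j a b =>
        ι_comm_adjoin F n _ _ (hPm i j)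
      have a1 : ξ ^ (2 * (k + 1)) = ξ * (P * ξ) := by
        rw [hP, ← pow_succ, ← pow_succ']; congr 1
      have a2 : ξ ^ (2 * (k + 1)) = (P * ξ) * ξ := by
        rw [hP, ← pow_succ, ← pow_succ]; congr 1
      have a3 : (ξ * (P * ξ)).trace = -((P * ξ) * ξ).trace := by
        simp only [Matrix.trace, Matrix.diag, Matrix.mul_apply, Finset.mul_sum, Finset.sum_mul]
        rw [Finset.sum_comm, ← Finset.sum_neg_distrib]
        refine Finset.sum_congr rfl fun j _ => ?_
        rw [← Finset.sum_neg_distrib]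
        refine Finset.sum_congr rfl fun i _ => ?_
        rw [← Finset.sum_neg_distrib]
        refine Finset.sum_congr rfl fun l _ => ?_
        rw [← mul_assoc, hPc, mul_assoc, mul_assoc, ← mul_neg]
        congr 1
        exact ι_swap F n _ _
      refine hE 2 _ two_ne_zero ?_
      rw [Nat.cast_two, two_mul]
      nth_rewrite 1 [a1]
      rw [a3, a2, neg_add_cancel]
  rw [← hMk, hM0, map_zero]
end

section
/- Let ξ be the generic n×n Grassmann matrix over the exterior algebra Λ on generators ξ_{i,j} (i,j = 1,…,n), and set t_i := tr(ξ^{2i−1}) for i = 1,…,n. Then the relation n·ξ^{2n−1} = Σ_{i=0}^{n−1} ξ^{2i} · t_{n−i} holds in Mₙ(Λ), where t_n = tr(ξ^{2n−1}); equivalently t_n·I = n·ξ^{2n−1} − Σ_{i=1}^{n−1} ξ^{2i}·t_{n−i}. -/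
section GGHelpers
open Polynomial Matrix

theorem GG_jacobi {R : Type*} [CommRing R] {m : Type*} [Fintype m] [DecidableEq m]
    (A : Matrix m m R) :
    derivative A.charpoly = (adjugate (charmatrix A)).trace := by
  rw [Matrix.charpoly, ← det_transpose, det_apply']
  simp only [Matrix.trace, Matrix.diag, adjugate_apply, ← det_transpose (updateRow _ _ _)]
  simp only [det_apply', derivative_sum]
  rw [Finset.sum_comm]
  refine Finset.sum_congr rfl fun σ _ => ?_
  rw [← Finset.mul_sum, derivative_mul, derivative_intCast, zero_mul, zero_add,
    derivative_prod_finset]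
  congr 1
  refine Finset.sum_congr rfl fun i _ => ?_
  rw [← Finset.mul_prod_erase Finset.univ _ (Finset.mem_univ i), mul_comm]
  congr 1
  · by_cases h : σ i = i
    · simp [transpose_apply, h, charmatrix_apply]
    · simp [transpose_apply, h, charmatrix_apply, diagonal_apply_ne' _ h]
  · refine Finset.prod_congr rfl fun j hj => ?_
    simp [transpose_apply, updateRow_apply, Finset.ne_of_mem_erase hj]

theorem GG_horner {R : Type*} [CommRing R] {m : Type*} [Fintype m] [DecidableEq m]
    (A : Matrix m m R) (k N : ℕ) :
    (matPolyEquiv (adjugate (charmatrix A))).coeff k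
      = ∑ j ∈ Finset.range N, A.charpoly.coeff (k + 1 + j) • A ^ j
        + (matPolyEquiv (adjugate (charmatrix A))).coeff (k + N) * A ^ N := by
  have key : ∀ k, (matPolyEquiv (adjugate (charmatrix A))).coeff k
      = A.charpoly.coeff (k + 1) • (1 : Matrix m m R)
        + (matPolyEquiv (adjugate (charmatrix A))).coeff (k + 1) * A := by
    intro k
    have h := congrArg matPolyEquiv (adjugate_mul (charmatrix A))
    rw [map_mul, matPolyEquiv_charmatrix] at h
    have h2 := congrArg (fun p => p.coeff (k + 1)) h
    simp only [mul_sub, coeff_sub, coeff_mul_X, coeff_mul_C] at h2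
    change _ = (matPolyEquiv (A.charpoly • (1 : Matrix m m R[X]))).coeff (k + 1) at h2
    rw [matPolyEquiv_smul_one, coeff_map] at h2
    rw [sub_eq_iff_eq_add] at h2
    rw [h2, Algebra.algebraMap_eq_smul_one]
  induction N with
  | zero => simp
  | succ N ih =>
    rw [ih, Finset.sum_range_succ, key (k + N), add_mul, pow_succ' A N]
    simp [add_assoc, add_left_comm, mul_assoc, add_comm 1 N]

theorem GG_newton {R : Type*} [CommRing R] {m : Type*} [Fintype m] [DecidableEq m]
    (A : Matrix m m R) (k : ℕ) :
    ((k + 1 : ℕ) : R) * A.charpoly.coeff (k + 1)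
      = ∑ j ∈ Finset.range (Fintype.card m + 1),
          A.charpoly.coeff (k + 1 + j) * (A ^ j).trace := by
  nontriviality R
  have hc : ∀ j, Fintype.card m < j → A.charpoly.coeff j = 0 := fun j hj =>
    coeff_eq_zero_of_natDegree_lt (by rwa [charpoly_natDegree_eq_dim])
  set q := matPolyEquiv (adjugate (charmatrix A)) with hq
  have h := GG_horner A k (Fintype.card m + 1 + q.natDegree)
  rw [← hq, q.coeff_eq_zero_of_natDegree_lt (n := k + _) (by omega), zero_mul, add_zero,
    Finset.sum_range_add] at h
  rw [Finset.sum_eq_zero (s := Finset.range q.natDegree), add_zero] at h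
  · have h2 := congrArg Matrix.trace h
    have h3 : (q.coeff k).trace = (derivative A.charpoly).coeff k := by
      rw [GG_jacobi]
      simp only [Matrix.trace, Matrix.diag, hq, matPolyEquiv_coeff_apply, finsetSum_coeff]
    rw [h3, coeff_derivative] at h2
    rw [mul_comm]
    push_cast
    rw [h2]
    simp [trace_sum]
  · intro j _
    rw [hc _ (by omega), zero_smul]

theorem GG_newton' {R : Type*} [CommRing R] {m : Type*} [Fintype m] [DecidableEq m]
    (A : Matrix m m R) (k : ℕ) :
    (k : R) * A.charpoly.coeff k
      = ∑ j ∈ Finset.range (Fintype.card m + 1),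
          A.charpoly.coeff (k + j) * (A ^ j).trace := by
  cases k with
  | succ k => exact GG_newton A k
  | zero =>
    nontriviality R
    have h := congrArg Matrix.trace (aeval_self_charpoly A)
    rw [aeval_eq_sum_range, charpoly_natDegree_eq_dim, trace_sum] at h
    simpa using h.symm

section
variable {Z M : Type*} [CommRing Z] [AddCommGroup M] [Module Z M] [Module Zᵐᵒᵖ M]
  [IsCentralScalar Z M]

open TrivSqZeroExt

theorem GG_coeff (hZ : ∀ (k : ℕ) (z : Z), k ≠ 0 → (k : Z) * z = 0 → z = 0) (n : ℕ)
    (X : Matrix (Fin n) (Fin n) (TrivSqZeroExt Z M))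
    (hX : ∀ k, k ≠ 0 → (X ^ k).trace.fst = 0) (k : ℕ) (hk : k < n) :
    (X.charpoly.coeff k).fst = 0 ∧
      ((n - k : ℕ) : TrivSqZeroExt Z M) * X.charpoly.coeff k = - (X ^ (n - k)).trace := by
  rcases subsingleton_or_nontrivial (TrivSqZeroExt Z M) with hs | hs
  · refine ⟨?_, Subsingleton.elim _ _⟩
    rw [Subsingleton.elim (X.charpoly.coeff k) 0, fst_zero]
  induction hd : n - k using Nat.strong_induction_on generalizing k with
  | _ d ih =>
  have hc : ∀ j, n < j → X.charpoly.coeff j = 0 := fun j hj =>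
    coeff_eq_zero_of_natDegree_lt (by rw [charpoly_natDegree_eq_dim]; simpa using hj)
  have hn : X.charpoly.coeff n = 1 := by
    have := X.charpoly_monic.coeff_natDegree
    rwa [charpoly_natDegree_eq_dim, Fintype.card_fin] at this
  have h := GG_newton' X k
  rw [Fintype.card_fin, Finset.sum_range_succ', pow_zero, trace_one, Fintype.card_fin,
    Finset.sum_eq_single (n - k - 1)] at h
  · have e : n - k - 1 + 1 = n - k := by omega
    rw [e, Nat.add_sub_of_le hk.le, hn, one_mul, add_zero] at h
    have h2 : ((d : ℕ) : TrivSqZeroExt Z M) * X.charpoly.coeff k = - (X ^ (n - k)).trace := by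
      rw [← hd, Nat.cast_sub hk.le, sub_mul, h]; ring
    refine ⟨hZ d _ (by omega) ?_, by rw [h2, hd]⟩
    have h3 := congrArg fst h2
    simpa [hX (n - k) (by omega)] using h3
  · intro j _ hj
    rcases lt_or_ge (k + (j + 1)) n with hlt | hge
    · have h1 := (ih (n - (k + (j + 1))) (by omega) _ hlt rfl).1
      have h2 := hX (j + 1) (by omega)
      ext
      · simp [h1]
      · simp [h1, h2]
    · rw [hc _ (by omega), zero_mul]
  · intro hh
    exact absurd (Finset.mem_range.2 (by omega)) hh

end

open TrivSqZeroExt in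
theorem GG_main {L : Type*} [Ring L] (hL : ∀ (k : ℕ) (z : L), k ≠ 0 → k • z = 0 → z = 0)
    (n : ℕ) (ξ : Matrix (Fin n) (Fin n) L)
    (hanti : ∀ i j k l, ξ i j * ξ k l = - (ξ k l * ξ i j))
    (hcen : ∀ i j k l, ξ i j * ξ k l ∈ Subring.center L) :
    n • ξ ^ (2 * n - 1) = ∑ i ∈ Finset.range n,
      ξ ^ (2 * i) * Matrix.scalar (Fin n) ((ξ ^ (2 * (n - i) - 1)).trace) := by
  have hsq : ∀ i j, (ξ ^ 2) i j ∈ Subring.center L := fun i j => by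
    rw [pow_two, Matrix.mul_apply]
    exact sum_mem fun k _ => hcen _ _ _ _
  have hev : ∀ k i j, (ξ ^ (2 * k)) i j ∈ Subring.center L := by
    intro k
    induction k with
    | zero =>
      intro i j
      rw [mul_zero, pow_zero, Matrix.one_apply]
      split_ifs
      · exact one_mem _
      · exact zero_mem _
    | succ k ih =>
      intro i j
      rw [mul_add, mul_one, pow_add, Matrix.mul_apply]
      exact sum_mem fun l _ => mul_mem (ih _ _) (hsq _ _)
  have hodd : ∀ k i j a b, (ξ ^ (2 * k + 1)) i j * ξ a b = - (ξ a b * (ξ ^ (2 * k + 1)) i j) := by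
    intro k i j a b
    rw [pow_succ, Matrix.mul_apply, Finset.sum_mul, Finset.mul_sum, ← Finset.sum_neg_distrib]
    refine Finset.sum_congr rfl fun l _ => ?_
    have h := Subring.mem_center_iff.1 (hev k i l) (ξ a b)
    rw [← mul_assoc, h, mul_assoc, hanti l j a b, mul_assoc, mul_neg]
  have htr : ∀ k, k ≠ 0 → (ξ ^ (2 * k)).trace = 0 := by
    intro k hk
    obtain ⟨k, rfl⟩ := Nat.exists_eq_succ_of_ne_zero hk
    apply hL 2 _ two_ne_zero
    have h1 : (ξ ^ (2 * (k + 1))).trace = ∑ i, ∑ l, (ξ ^ (2 * k + 1)) i l * ξ l i := by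
      rw [show 2 * (k + 1) = (2 * k + 1) + 1 by ring, pow_succ]
      simp [Matrix.trace, Matrix.mul_apply]
    have h2 : (ξ ^ (2 * (k + 1))).trace = ∑ i, ∑ l, ξ i l * (ξ ^ (2 * k + 1)) l i := by
      rw [show 2 * (k + 1) = (2 * k + 1) + 1 by ring, pow_succ']
      simp [Matrix.trace, Matrix.mul_apply]
    rw [two_nsmul]
    nth_rewrite 1 [h1]
    rw [h2, Finset.sum_comm, ← Finset.sum_add_distrib]
    refine Finset.sum_eq_zero fun i _ => ?_
    rw [← Finset.sum_add_distrib]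
    refine Finset.sum_eq_zero fun l _ => ?_
    rw [hodd, neg_add_cancel]
  letI : Module (Subring.center L)ᵐᵒᵖ L :=
    Module.compHom L ((RingHom.id (Subring.center L)).fromOpposite (fun x y => mul_comm _ _))
  haveI : IsCentralScalar (Subring.center L) L := ⟨fun _ _ => rfl⟩
  let X : Matrix (Fin n) (Fin n) (TrivSqZeroExt (Subring.center L) L) :=
    fun i j => (⟨(ξ ^ 2) i j, hsq i j⟩, ξ i j)
  have hXf : ∀ i j, ((X i j).fst : L) = (ξ ^ 2) i j := fun _ _ => rfl
  have hXs : ∀ i j, (X i j).snd = ξ i j := fun _ _ => rfl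
  have hf : ∀ k i j, (((X ^ k) i j).fst : L) = (ξ ^ (2 * k)) i j := by
    intro k
    induction k with
    | zero =>
      intro i j
      rw [mul_zero, pow_zero, pow_zero, Matrix.one_apply, Matrix.one_apply]
      split_ifs <;> simp
    | succ k ih =>
      intro i j
      rw [mul_add, mul_one, pow_succ, pow_add, Matrix.mul_apply, Matrix.mul_apply, fst_sum]
      simp [ih, hXf]
  have hs : ∀ k i j, ((X ^ (k + 1)) i j).snd = (k + 1) • (ξ ^ (2 * k + 1)) i j := by
    intro k
    induction k with
    | zero => intro i j; simp [hXs]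
    | succ k ih =>
      intro i j
      rw [pow_succ, Matrix.mul_apply, snd_sum]
      have e1 : (ξ ^ (2 * (k + 1) + 1)) i j = ∑ l, (ξ ^ (2 * (k + 1))) i l * ξ l j := by
        rw [pow_succ, Matrix.mul_apply]
      have e2 : (ξ ^ (2 * (k + 1) + 1)) i j = ∑ l, (ξ ^ (2 * k + 1)) i l * (ξ ^ 2) l j := by
        rw [show 2 * (k + 1) + 1 = (2 * k + 1) + 2 by ring, pow_add, Matrix.mul_apply]
      rw [add_smul, one_smul]
      nth_rewrite 1 [e2]
      rw [e1, Finset.smul_sum, ← Finset.sum_add_distrib]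
      refine Finset.sum_congr rfl fun l _ => ?_
      rw [snd_mul, op_smul_eq_smul, Subring.smul_def, Subring.smul_def, hf, hXf, hXs, ih,
        smul_eq_mul, smul_eq_mul, mul_smul_comm,
        ← Subring.mem_center_iff.1 (hsq l j), add_comm]
  have htf : ∀ k, k ≠ 0 → (X ^ k).trace.fst = 0 := by
    intro k hk
    apply Subtype.ext
    rw [Matrix.trace, fst_sum, AddSubmonoidClass.coe_finsetSum]
    simpa [hf, Matrix.trace] using htr k hk
  have hts : ∀ k, k ≠ 0 → (X ^ k).trace.snd = k • (ξ ^ (2 * k - 1)).trace := by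
    intro k hk
    obtain ⟨k, rfl⟩ := Nat.exists_eq_succ_of_ne_zero hk
    rw [Matrix.trace, snd_sum, Matrix.trace, Finset.smul_sum]
    refine Finset.sum_congr rfl fun i _ => hs k i i
  have hZ : ∀ (k : ℕ) (z : Subring.center L), k ≠ 0 → (k : Subring.center L) * z = 0 → z = 0 := by
    intro k z hk h
    apply Subtype.ext
    apply hL k _ hk
    rw [nsmul_eq_mul]
    simpa using congrArg Subtype.val h
  have hc := GG_coeff hZ n X htf
  have hcs : ∀ k < n, (X.charpoly.coeff k).snd = - (ξ ^ (2 * (n - k) - 1)).trace := by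
    intro k hk
    have h := congrArg snd (hc k hk).2
    rw [← nsmul_eq_mul, snd_neg, hts _ (by omega), snd_smul] at h
    rw [← sub_eq_zero]
    apply hL (n - k) _ (by omega)
    rw [smul_sub, h, smul_neg, sub_self]
  rcases subsingleton_or_nontrivial L with hsub | hnon
  · ext i j; exact Subsingleton.elim _ _
  have hCH := aeval_self_charpoly X
  rw [aeval_eq_sum_range, charpoly_natDegree_eq_dim, Fintype.card_fin,
    Finset.sum_range_succ] at hCH
  have hn : X.charpoly.coeff n = 1 := by
    have := X.charpoly_monic.coeff_natDegree
    rwa [charpoly_natDegree_eq_dim, Fintype.card_fin] at this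
  rw [hn, one_smul] at hCH
  ext i j
  have h := congrArg (fun Y => (Y i j).snd) hCH
  simp only [Matrix.add_apply, Matrix.sum_apply, snd_add, snd_sum, Matrix.smul_apply,
    smul_eq_mul, Matrix.zero_apply, snd_zero] at h
  rw [Matrix.sum_apply, Matrix.smul_apply]
  rcases n with _ | n
  · exact i.elim0
  rw [hs, add_comm, ← eq_neg_iff_add_eq_zero] at h
  rw [show 2 * (n + 1) - 1 = 2 * n + 1 by omega, h, ← Finset.sum_neg_distrib]
  refine Finset.sum_congr rfl fun k hk => ?_
  rw [snd_mul, (hc k (Finset.mem_range.1 hk)).1, zero_smul, zero_add, op_smul_eq_smul,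
    Subring.smul_def, hf, hcs k (Finset.mem_range.1 hk), smul_eq_mul, mul_neg, neg_neg,
    Matrix.scalar_apply, Matrix.mul_diagonal]

end GGHelpers

/-- With `ξ` the generic `n × n` Grassmann matrix and `t_j := tr(ξ^{2j−1})`, the relation
`n·ξ^{2n−1} = Σ_{i=0}^{n−1} ξ^{2i} · t_{n−i}` holds in `Mₙ(Λ)` (Lemma 4.3 of
Brešar–Procesi–Špenko). -/
theorem genericGrassmannMatrix_missing_generator_relation
    (F : Type*) [Field F] [CharZero F] (n : ℕ) (hn : 0 < n) :
    (n : ℕ) • (genericGrassmannMatrix F n) ^ (2 * n - 1)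
      = ∑ i ∈ Finset.range n,
          (genericGrassmannMatrix F n) ^ (2 * i) *
            Matrix.scalar (Fin n)
              (((genericGrassmannMatrix F n) ^ (2 * (n - i) - 1)).trace) := by
  have anti : ∀ x y : (Fin n × Fin n) → F, ExteriorAlgebra.ι F x * ExteriorAlgebra.ι F y
      = - (ExteriorAlgebra.ι F y * ExteriorAlgebra.ι F x) := fun x y =>
    eq_neg_of_add_eq_zero_left (ExteriorAlgebra.ι_add_mul_swap x y)
  apply GG_main
  · intro k z hk h
    rw [← Nat.cast_smul_eq_nsmul F] at h
    exact (smul_eq_zero.1 h).resolve_left (Nat.cast_ne_zero.2 hk)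
  · intro i j k l
    exact anti _ _
  · intro i j k l
    rw [Subring.mem_center_iff]
    intro g
    unfold genericGrassmannMatrix
    induction g using ExteriorAlgebra.induction with
    | algebraMap r => exact Algebra.commutes _ _
    | ι x =>
      rw [← mul_assoc, anti x, neg_mul, mul_assoc, anti x, mul_neg, neg_neg, mul_assoc]
    | mul a b ha hb => rw [mul_assoc, hb, ← mul_assoc, ha, mul_assoc]
    | add a b ha hb => rw [add_mul, mul_add, ha, hb]
end
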